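/- Let T : M₀ → M₀ be any mapping on the set of all probability distributions on ℝ. Then T commutes with the utility transform T^u for every increasing left-continuous u : ℝ → ℝ if and only if there exists a right-continuous distortion function d with d(0+)=0 and d(1−)=1 (i.e., d ∈ F_D^R ∩ F̂_D) such that T = T_d. -/

import Mathlib

/-!
For increasing left-continuous `u`, each set `{u ≤ x}` is empty, all of `ℝ`, or a half-line
`(-∞, a]` (`preimage_Iic_cases`). Hence `T^u F x` is `0`, `1` or `F a`, where which case occurs
and the value of `a` do not depend on `F`. If `d` is right-continuous, then `T_d F = d ∘ F`
(`distortT_eq_comp`), and since `d 0 = 0` and `d 1 = 1`, applying `d` pointwise commutes with `T^u`.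

Conversely, let `L` be the logistic cdf (`Real.sigmoid`), an increasing bijection from `ℝ` onto
`(0, 1)`. For every cdf `F`, the function `u = F_L⁻¹ ∘ L` is increasing and left-continuous, and
`T^u L = F` (`utilityT_quantileU_sigmoid`). So a `T` that commutes with all such `T^u` satisfies
`T F = T^u (T L)`. Since `u y ≤ x ↔ L y ≤ F x`, the right-hand side is `d ∘ F` with
`d = (T L) ∘ L⁻¹` (`utilityT_quantileU`). That `d` lies in the required class follows from the fact
that `T L` is a cdf; because `L` has full support, the limits of `T L` at `±∞` are exactly
`d(0+) = 0` and `d(1-) = 1`.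
-/

open MeasureTheory Filter Topology Set

noncomputable section

/-- The set of cdfs of compactly supported probability distributions on ℝ:
increasing, right-continuous, equal to `0` for all sufficiently small `x` and
equal to `1` for all sufficiently large `x`. -/
def mSet : Set (ℝ → ℝ) :=
  {F | Monotone F ∧ (∀ x, ContinuousWithinAt F (Set.Ici x) x) ∧
    (∃ a, ∀ x ≤ a, F x = 0) ∧ (∃ b, ∀ x, b ≤ x → F x = 1)}

/-- The set of cdfs of all probability distributions on ℝ: increasing,
right-continuous, with limit `0` at `-∞` and limit `1` at `+∞`. -/
def m0Set : Set (ℝ → ℝ) :=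
  {F | Monotone F ∧ (∀ x, ContinuousWithinAt F (Set.Ici x) x) ∧
    Tendsto F atBot (𝓝 0) ∧ Tendsto F atTop (𝓝 1)}

/-- A utility function: increasing (non-strict) and continuous. -/
def IsUF (u : ℝ → ℝ) : Prop := Monotone u ∧ Continuous u

/-- An increasing and left-continuous function on ℝ. -/
def IsLeftCtsIncr (u : ℝ → ℝ) : Prop :=
  Monotone u ∧ ∀ x, ContinuousWithinAt u (Set.Iic x) x

/-- A distortion function: an increasing function `d : [0,1] → [0,1]` with
`d 0 = 0` and `d 1 = 1` (values outside `[0,1]` are irrelevant). -/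
def IsDF (d : ℝ → ℝ) : Prop :=
  MonotoneOn d (Set.Icc 0 1) ∧ d 0 = 0 ∧ d 1 = 1

/-- Right-continuity of a distortion function on `[0,1)`. -/
def DFRightCts (d : ℝ → ℝ) : Prop :=
  ∀ x ∈ Set.Ico (0:ℝ) 1, ContinuousWithinAt d (Set.Ioi x) x

/-- A distortion function with moreover `d(0+) = 0` and `d(1-) = 1`. -/
def IsDFhat (d : ℝ → ℝ) : Prop :=
  IsDF d ∧ Tendsto d (𝓝[>] (0:ℝ)) (𝓝 0) ∧ Tendsto d (𝓝[<] (1:ℝ)) (𝓝 1)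

/-- The probability distortion generated by `d`:  `T_d F x = (d ∘ F)(x+)`,
the right limit of `d ∘ F` at `x`. -/
noncomputable def distortT (d F : ℝ → ℝ) : ℝ → ℝ :=
  fun x => Function.rightLim (d ∘ F) x

/-- The utility transform `T^u`: it maps a cdf `F` to the cdf of the
pushforward under `u` of the probability measure with cdf `F`. -/
noncomputable def utilityT (u F : ℝ → ℝ) : ℝ → ℝ := by
  classical
  exact
    if h : Monotone F ∧ ∀ x, ContinuousWithinAt F (Set.Ici x) x then
      fun x => ((StieltjesFunction.measure ⟨F, h.1, h.2⟩).map u (Set.Iic x)).toReal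
    else F

/-- Left quantile `F_L^{-1}(p) = inf {x | F x ≥ p}`. -/
noncomputable def leftQ (F : ℝ → ℝ) (p : ℝ) : ℝ := sInf {x | p ≤ F x}

/-- Right quantile `F_R^{-1}(p) = inf {x | F x > p}`. -/
noncomputable def rightQ (F : ℝ → ℝ) (p : ℝ) : ℝ := sInf {x | p < F x}

lemma m0Set_nonneg {F : ℝ → ℝ} (hF : F ∈ m0Set) (x : ℝ) : 0 ≤ F x :=
  hF.1.le_of_tendsto hF.2.2.1 x

lemma m0Set_le_one {F : ℝ → ℝ} (hF : F ∈ m0Set) (x : ℝ) : F x ≤ 1 :=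
  hF.1.ge_of_tendsto hF.2.2.2 x

/-! ### The utility transform -/

/-- The probability measure whose cdf is `F`. -/
def measOf (F : ℝ → ℝ) (hF : F ∈ m0Set) : Measure ℝ :=
  StieltjesFunction.measure ⟨F, hF.1, hF.2.1⟩

lemma isProb_measOf {F : ℝ → ℝ} (hF : F ∈ m0Set) : IsProbabilityMeasure (measOf F hF) :=
  StieltjesFunction.isProbabilityMeasure ⟨F, hF.1, hF.2.1⟩ hF.2.2.1 hF.2.2.2

lemma measOf_Iic {F : ℝ → ℝ} (hF : F ∈ m0Set) (x : ℝ) :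
    (measOf F hF (Iic x)).toReal = F x := by
  have h := StieltjesFunction.measure_Iic ⟨F, hF.1, hF.2.1⟩ hF.2.2.1 x
  rw [measOf, h, sub_zero]
  exact ENNReal.toReal_ofReal (m0Set_nonneg hF x)

lemma utilityT_apply {F u : ℝ → ℝ} (hF : F ∈ m0Set) (x : ℝ) :
    utilityT u F x = ((measOf F hF).map u (Iic x)).toReal := by
  have h : Monotone F ∧ ∀ x, ContinuousWithinAt F (Set.Ici x) x := ⟨hF.1, hF.2.1⟩
  simp only [utilityT, dif_pos h, measOf]

lemma utilityT_apply_preimage {F u : ℝ → ℝ} (hF : F ∈ m0Set) (hu : Monotone u) (x : ℝ) :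
    utilityT u F x = (measOf F hF (u ⁻¹' Iic x)).toReal := by
  rw [utilityT_apply hF, Measure.map_apply hu.measurable measurableSet_Iic]

lemma utilityT_mem {F u : ℝ → ℝ} (hF : F ∈ m0Set) (hu : Monotone u) :
    utilityT u F ∈ m0Set := by
  have := isProb_measOf hF
  have : IsProbabilityMeasure ((measOf F hF).map u) :=
    Measure.isProbabilityMeasure_map hu.measurable.aemeasurable
  have h : utilityT u F = ProbabilityTheory.cdf ((measOf F hF).map u) := by
    ext x
    rw [utilityT_apply hF, ProbabilityTheory.cdf_eq_real, Measure.real]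
  rw [h]
  exact ⟨ProbabilityTheory.monotone_cdf _, (ProbabilityTheory.cdf _).right_continuous,
    ProbabilityTheory.tendsto_cdf_atBot _, ProbabilityTheory.tendsto_cdf_atTop _⟩

lemma utilityT_of_empty {F u : ℝ → ℝ} (hF : F ∈ m0Set) (hu : Monotone u) {x : ℝ}
    (h : u ⁻¹' Iic x = ∅) : utilityT u F x = 0 := by
  rw [utilityT_apply_preimage hF hu, h]; simp

lemma utilityT_of_univ {F u : ℝ → ℝ} (hF : F ∈ m0Set) (hu : Monotone u) {x : ℝ}
    (h : u ⁻¹' Iic x = univ) : utilityT u F x = 1 := by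
  have := isProb_measOf hF
  rw [utilityT_apply_preimage hF hu, h]; simp

lemma utilityT_of_Iic {F u : ℝ → ℝ} (hF : F ∈ m0Set) (hu : Monotone u) {x a : ℝ}
    (h : u ⁻¹' Iic x = Iic a) : utilityT u F x = F a := by
  rw [utilityT_apply_preimage hF hu, h, measOf_Iic]

/-- For increasing `u`, left-continuity makes the lower sets `{u ≤ x}` closed, which is why
they can only be trivial or closed half-lines. -/
lemma preimage_Iic_cases {u : ℝ → ℝ} (hu : IsLeftCtsIncr u) (x : ℝ) :
    u ⁻¹' Iic x = ∅ ∨ u ⁻¹' Iic x = univ ∨ ∃ a, u ⁻¹' Iic x = Iic a := by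
  rcases (u ⁻¹' Iic x).eq_empty_or_nonempty with h0 | hne
  · exact Or.inl h0
  right
  by_cases hb : BddAbove (u ⁻¹' Iic x)
  · right
    set a := sSup (u ⁻¹' Iic x) with ha
    refine ⟨a, Subset.antisymm (fun y hy => le_csSup hb hy) fun y hy => ?_⟩
    have hlt : ∀ z < a, u z ≤ x := fun z hz => by
      obtain ⟨w, hw, hzw⟩ := exists_lt_of_lt_csSup hne hz
      exact (hu.1 hzw.le).trans hw
    have hau : u a ≤ x := by
      refine le_of_tendsto ((hu.2 a).mono_left (nhdsWithin_mono a Iio_subset_Iic_self)) ?_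
      filter_upwards [self_mem_nhdsWithin] with z hz using hlt z hz
    exact (hu.1 hy).trans hau
  · left
    refine eq_univ_of_forall fun y => ?_
    obtain ⟨w, hw, hyw⟩ := not_bddAbove_iff.1 hb y
    exact (hu.1 hyw.le).trans hw

lemma isLeftCtsIncr_of_isClosed {u : ℝ → ℝ} (hu : Monotone u)
    (hc : ∀ x, IsClosed (u ⁻¹' Iic x)) : IsLeftCtsIncr u := by
  refine ⟨hu, fun y => tendsto_order.2 ⟨fun a ha => ?_, fun b hb => ?_⟩⟩
  · have ho : (u ⁻¹' Iic a)ᶜ ∈ 𝓝 y := (hc a).isOpen_compl.mem_nhds (by simpa using ha)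
    filter_upwards [mem_nhdsWithin_of_mem_nhds ho] with z hz
    simpa using hz
  · filter_upwards [self_mem_nhdsWithin] with z hz
    exact (hu hz).trans_lt hb

/-! ### Right-continuous distortions -/

/-- When `d` is right-continuous, the right limit in `T_d` is superfluous. At points where
`F x = 1`, nothing is known about `d` to the right of `1`, but `F` is constant there. -/
lemma distortT_eq_comp {d F : ℝ → ℝ} (hd : DFRightCts d) (hF : F ∈ m0Set) :
    distortT d F = d ∘ F := by
  ext x
  refine rightLim_eq_of_tendsto ?_
  rcases (m0Set_le_one hF x).lt_or_eq with h1 | h1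
  · have hc : ContinuousWithinAt d (Ici (F x)) (F x) :=
      continuousWithinAt_Ioi_iff_Ici.1 (hd _ ⟨m0Set_nonneg hF x, h1⟩)
    have hF' : Tendsto F (𝓝[>] x) (𝓝[≥] (F x)) := by
      refine tendsto_nhdsWithin_iff.2
        ⟨(hF.2.1 x).mono_left (nhdsWithin_mono x Ioi_subset_Ici_self), ?_⟩
      filter_upwards [self_mem_nhdsWithin] with z hz using hF.1 (le_of_lt hz)
    exact Tendsto.comp hc hF'
  · refine tendsto_const_nhds.congr' ?_
    filter_upwards [self_mem_nhdsWithin] with z hz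
    have : F z = 1 := le_antisymm (m0Set_le_one hF z) (h1 ▸ hF.1 (le_of_lt hz))
    simp [this, h1]

/-! ### The logistic distribution as a universal source -/

lemma sigmoid_mem : Real.sigmoid ∈ m0Set :=
  ⟨Real.sigmoid_monotone, fun _ => continuous_sigmoid.continuousWithinAt,
    Real.tendsto_sigmoid_atBot, Real.tendsto_sigmoid_atTop⟩

/-- The inverse of the logistic cdf on `(0, 1)`. -/
def logitQ (p : ℝ) : ℝ := -Real.log (p⁻¹ - 1)

lemma inv_sub_one_pos {p : ℝ} (h0 : 0 < p) (h1 : p < 1) : 0 < p⁻¹ - 1 :=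
  sub_pos.2 ((one_lt_inv₀ h0).2 h1)

lemma sigmoid_logitQ {p : ℝ} (h0 : 0 < p) (h1 : p < 1) : Real.sigmoid (logitQ p) = p := by
  simp [Real.sigmoid_def, logitQ, Real.exp_log (inv_sub_one_pos h0 h1)]

lemma sigmoid_le_iff_le_logitQ {p : ℝ} (h0 : 0 < p) (h1 : p < 1) (y : ℝ) :
    Real.sigmoid y ≤ p ↔ y ≤ logitQ p := by
  rw [← Real.sigmoid_le_iff (a := y), sigmoid_logitQ h0 h1]

lemma logitQ_mono {p q : ℝ} (h0 : 0 < p) (hpq : p ≤ q) (h1 : q < 1) : logitQ p ≤ logitQ q := by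
  rw [← Real.sigmoid_le_iff, sigmoid_logitQ h0 (hpq.trans_lt h1),
    sigmoid_logitQ (h0.trans_le hpq) h1]
  exact hpq

lemma continuousAt_logitQ {p : ℝ} (h0 : 0 < p) (h1 : p < 1) : ContinuousAt logitQ p :=
  (((continuousAt_inv₀ h0.ne').sub continuousAt_const).log (inv_sub_one_pos h0 h1).ne').neg

lemma tendsto_logitQ_zero : Tendsto logitQ (𝓝[>] 0) atBot :=
  tendsto_neg_atTop_atBot.comp (Real.tendsto_log_atTop.comp
    (tendsto_atTop_add_const_right _ (-1) tendsto_inv_nhdsGT_zero))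

lemma tendsto_logitQ_one : Tendsto logitQ (𝓝[<] 1) atTop := by
  refine tendsto_neg_atBot_atTop.comp (Real.tendsto_log_nhdsGT_zero.comp ?_)
  refine tendsto_nhdsWithin_iff.2 ⟨?_, ?_⟩
  · have h : ContinuousAt (fun p : ℝ => p⁻¹ - 1) 1 :=
      (continuousAt_inv₀ one_ne_zero).sub continuousAt_const
    have h' : Tendsto (fun p : ℝ => p⁻¹ - 1) (𝓝 1) (𝓝 0) := by simpa [ContinuousAt] using h
    exact h'.mono_left nhdsWithin_le_nhds
  · filter_upwards [Ioo_mem_nhdsLT (zero_lt_one' ℝ)] with p hp using inv_sub_one_pos hp.1 hp.2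

/-- The Galois connection between a cdf and its left quantile function. -/
lemma leftQ_le_iff {F : ℝ → ℝ} (hF : F ∈ m0Set) {p : ℝ} (h0 : 0 < p) (h1 : p < 1) (x : ℝ) :
    leftQ F p ≤ x ↔ p ≤ F x := by
  have hne : {x | p ≤ F x}.Nonempty := (hF.2.2.2.eventually (eventually_ge_nhds h1)).exists
  have hbdd : BddBelow {x | p ≤ F x} := by
    obtain ⟨b, hb⟩ := (hF.2.2.1.eventually (eventually_lt_nhds h0)).exists
    refine ⟨b, fun y hy => ?_⟩
    by_contra hyb
    exact absurd (hy.trans (hF.1 (not_le.1 hyb).le)) (not_le.2 hb)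
  refine ⟨fun h => ?_, fun h => csInf_le hbdd h⟩
  have hq : p ≤ F (leftQ F p) := by
    refine ge_of_tendsto
      ((hF.2.1 (leftQ F p)).mono_left (nhdsWithin_mono _ Ioi_subset_Ici_self)) ?_
    filter_upwards [self_mem_nhdsWithin] with z hz
    obtain ⟨w, hw, hwz⟩ := exists_lt_of_csInf_lt hne hz
    exact le_trans hw (hF.1 hwz.le)
  exact hq.trans (hF.1 h)

/-- The increasing function that transports the logistic distribution to the distribution
with cdf `F`. -/
def quantileU (F : ℝ → ℝ) (y : ℝ) : ℝ := leftQ F (Real.sigmoid y)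

lemma quantileU_le_iff {F : ℝ → ℝ} (hF : F ∈ m0Set) (x y : ℝ) :
    quantileU F y ≤ x ↔ Real.sigmoid y ≤ F x :=
  leftQ_le_iff hF (Real.sigmoid_pos y) (Real.sigmoid_lt_one y) x

lemma isLeftCtsIncr_quantileU {F : ℝ → ℝ} (hF : F ∈ m0Set) : IsLeftCtsIncr (quantileU F) := by
  refine isLeftCtsIncr_of_isClosed (fun y z hyz => ?_) fun x => ?_
  · rw [quantileU_le_iff hF]
    exact (Real.sigmoid_monotone hyz).trans ((quantileU_le_iff hF _ _).1 le_rfl)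
  · have : quantileU F ⁻¹' Iic x = {y | Real.sigmoid y ≤ F x} := by
      ext y; exact quantileU_le_iff hF x y
    rw [this]
    exact isClosed_le continuous_sigmoid continuous_const

/-- The distortion function `G ∘ L⁻¹` obtained from a cdf `G`, where `L` is the logistic cdf.
It is extended by `0` to the left of `(0, 1)` and by `1` to the right. -/
def distOf (G : ℝ → ℝ) (p : ℝ) : ℝ :=
  if p ≤ 0 then 0 else if 1 ≤ p then 1 else G (logitQ p)

lemma distOf_of_mem {G : ℝ → ℝ} {p : ℝ} (h0 : 0 < p) (h1 : p < 1) :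
    distOf G p = G (logitQ p) := by
  simp [distOf, not_le.2 h0, not_le.2 h1]

lemma distOf_zero {G : ℝ → ℝ} : distOf G 0 = 0 := by simp [distOf]

lemma distOf_one {G : ℝ → ℝ} : distOf G 1 = 1 := by norm_num [distOf]

lemma tendsto_distOf_zero {G : ℝ → ℝ} (hG : G ∈ m0Set) :
    Tendsto (distOf G) (𝓝[>] 0) (𝓝 0) := by
  refine (hG.2.2.1.comp tendsto_logitQ_zero).congr' ?_
  filter_upwards [Ioo_mem_nhdsGT (zero_lt_one' ℝ)] with p hp using (distOf_of_mem hp.1 hp.2).symm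

lemma tendsto_distOf_one {G : ℝ → ℝ} (hG : G ∈ m0Set) :
    Tendsto (distOf G) (𝓝[<] 1) (𝓝 1) := by
  refine (hG.2.2.2.comp tendsto_logitQ_one).congr' ?_
  filter_upwards [Ioo_mem_nhdsLT (zero_lt_one' ℝ)] with p hp using (distOf_of_mem hp.1 hp.2).symm

lemma monotone_distOf {G : ℝ → ℝ} (hG : G ∈ m0Set) : Monotone (distOf G) := by
  intro p q hpq
  unfold distOf
  split_ifs with h1 h2 h3 h4 h5 h6 h7
  any_goals first | exact le_rfl | exact zero_le_one | exact m0Set_nonneg hG _ | exact m0Set_le_one hG _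
  any_goals linarith
  exact hG.1 (logitQ_mono (not_le.1 h1) hpq (by linarith))

lemma isDFhat_distOf {G : ℝ → ℝ} (hG : G ∈ m0Set) : IsDFhat (distOf G) :=
  ⟨⟨(monotone_distOf hG).monotoneOn _, distOf_zero, distOf_one⟩,
    tendsto_distOf_zero hG, tendsto_distOf_one hG⟩

lemma dfRightCts_distOf {G : ℝ → ℝ} (hG : G ∈ m0Set) : DFRightCts (distOf G) := by
  rintro p ⟨h0, h1⟩
  rcases h0.eq_or_lt with rfl | h0
  · simpa [ContinuousWithinAt, distOf_zero] using tendsto_distOf_zero hG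
  · rw [ContinuousWithinAt, distOf_of_mem h0 h1]
    have hQ : Tendsto logitQ (𝓝[>] p) (𝓝[≥] (logitQ p)) := by
      refine tendsto_nhdsWithin_iff.2
        ⟨(continuousAt_logitQ h0 h1).mono_left nhdsWithin_le_nhds, ?_⟩
      filter_upwards [Ioo_mem_nhdsGT h1] with q hq using logitQ_mono h0 hq.1.le hq.2
    refine (Tendsto.comp (hG.2.1 (logitQ p)) hQ).congr' ?_
    filter_upwards [Ioo_mem_nhdsGT h1] with q hq
    exact (distOf_of_mem (h0.trans hq.1) hq.2).symm

lemma utilityT_quantileU {F G : ℝ → ℝ} (hF : F ∈ m0Set) (hG : G ∈ m0Set) :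
    utilityT (quantileU F) G = distOf G ∘ F := by
  ext x
  have hu := (isLeftCtsIncr_quantileU hF).1
  rcases (m0Set_nonneg hF x).eq_or_lt with h0 | h0
  · rw [utilityT_of_empty hG hu, Function.comp, ← h0, distOf_zero]
    ext y
    simp [quantileU_le_iff hF, ← h0, Real.sigmoid_pos]
  rcases (m0Set_le_one hF x).eq_or_lt with h1 | h1
  · rw [utilityT_of_univ hG hu, Function.comp, h1, distOf_one]
    ext y
    simp [quantileU_le_iff hF, h1, Real.sigmoid_le_one]
  · rw [utilityT_of_Iic hG hu (a := logitQ (F x)), Function.comp, distOf_of_mem h0 h1]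
    ext y
    simp [quantileU_le_iff hF, sigmoid_le_iff_le_logitQ h0 h1]

/-- Taking `G = L` in `utilityT_quantileU` gives the quantile representation of `F`. -/
lemma utilityT_quantileU_sigmoid {F : ℝ → ℝ} (hF : F ∈ m0Set) :
    utilityT (quantileU F) Real.sigmoid = F := by
  rw [utilityT_quantileU hF sigmoid_mem]
  ext x
  rcases (m0Set_nonneg hF x).eq_or_lt with h0 | h0
  · rw [Function.comp, ← h0, distOf_zero]
  rcases (m0Set_le_one hF x).eq_or_lt with h1 | h1
  · rw [Function.comp, h1, distOf_one]
  · rw [Function.comp, distOf_of_mem h0 h1, sigmoid_logitQ h0 h1]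

/-- A map `T : M₀ → M₀` commutes with the utility transform `T^u` for every
increasing left-continuous `u : ℝ → ℝ` if and only if `T = T_d` for some
right-continuous distortion function `d` with `d(0+) = 0` and `d(1-) = 1`. -/
theorem stmt10 (T : (ℝ → ℝ) → ℝ → ℝ) (hT : ∀ F ∈ m0Set, T F ∈ m0Set) :
    (∀ u : ℝ → ℝ, IsLeftCtsIncr u → ∀ F ∈ m0Set,
        T (utilityT u F) = utilityT u (T F)) ↔
      ∃ d : ℝ → ℝ, IsDFhat d ∧ DFRightCts d ∧ ∀ F ∈ m0Set, T F = distortT d F := by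
  constructor
  · intro hcomm
    have hG : T Real.sigmoid ∈ m0Set := hT _ sigmoid_mem
    refine ⟨distOf (T Real.sigmoid), isDFhat_distOf hG, dfRightCts_distOf hG, fun F hF => ?_⟩
    rw [distortT_eq_comp (dfRightCts_distOf hG) hF, ← utilityT_quantileU hF hG,
      ← hcomm _ (isLeftCtsIncr_quantileU hF) _ sigmoid_mem, utilityT_quantileU_sigmoid hF]
  · rintro ⟨d, hd, hdr, hTd⟩ u hu F hF
    have huF := utilityT_mem hF hu.1
    have hTF : T F = d ∘ F := by rw [hTd F hF, distortT_eq_comp hdr hF]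
    have hmem : d ∘ F ∈ m0Set := hTF ▸ hT F hF
    rw [hTF, hTd _ huF, distortT_eq_comp hdr huF]
    ext x
    rw [Function.comp]
    rcases preimage_Iic_cases hu x with h | h | ⟨a, h⟩
    · rw [utilityT_of_empty hF hu.1 h, utilityT_of_empty hmem hu.1 h, hd.1.2.1]
    · rw [utilityT_of_univ hF hu.1 h, utilityT_of_univ hmem hu.1 h, hd.1.2.2]
    · rw [utilityT_of_Iic hF hu.1 h, utilityT_of_Iic hmem hu.1 h, Function.comp]
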